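/- Suppose the nonuniform time mesh satisfies: for every k ≥ 2, if ρ* < ρ_k < η then ρ* < ρ_{k+1} ≤ ρ_k²(1+ρ_k)/(1 − 3ρ_k²(1+ρ_k)), and if ρ_k ≥ η then ρ_{k+1} > ρ*. Then for every n ≥ 1 and every vector x = (x_1, …, x_n) ∈ ℝⁿ, the quadratic form of the L2-1_σ matrix M satisfies xᵀ(M + Mᵀ)x ≥ (1−α)^{−1} Σ_{k=1}^n g_k(α) x_k² ≥ 0, where each g_k(α) > 0. Equivalently, the bilinear form 𝓑_n of the L2-1_σ operator is positive semidefinite, with 𝓑_n(u,u) ≥ Σ_{k=1}^n [g_k(α)/(2Γ(2−α))] ‖δ_k u‖²_{L²} ≥ 0. -/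

import Mathlib

open MeasureTheory Real Finset

noncomputable section

/-- Time step `τ_j = t_j - t_{j-1}`. -/
def tau (t : ℕ → ℝ) (j : ℕ) : ℝ := t j - t (j - 1)

/-- Step ratio `ρ_j = τ_j / τ_{j-1}`. -/
def rho (t : ℕ → ℝ) (j : ℕ) : ℝ := tau t j / tau t (j - 1)

/-- Offset node `t_k^* = t_{k-1} + σ τ_k` with `σ = 1 - α/2`. -/
def tstar (α : ℝ) (t : ℕ → ℝ) (k : ℕ) : ℝ := t (k - 1) + (1 - α / 2) * tau t k

/-- L2-1_σ coefficient `a_j^k`. -/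
def acoef (α : ℝ) (t : ℕ → ℝ) (j k : ℕ) : ℝ :=
  ∫ θ in (0:ℝ)..1,
    (-2 * tau t j * (1 - θ) - tau t (j + 1)) /
      ((tau t j + tau t (j + 1)) * (tstar α t k - (t (j - 1) + θ * tau t j)) ^ α)

/-- L2-1_σ coefficient `c_j^k`. -/
def ccoef (α : ℝ) (t : ℕ → ℝ) (j k : ℕ) : ℝ :=
  ∫ θ in (0:ℝ)..1,
    (tau t j ^ 2 * (2 * θ - 1)) /
      (tau t (j + 1) * (tau t j + tau t (j + 1)) *
        (tstar α t k - (t (j - 1) + θ * tau t j)) ^ α)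

/-- `d_j^k = c_{j-1}^k - a_j^k`. -/
def dcoef (α : ℝ) (t : ℕ → ℝ) (j k : ℕ) : ℝ := ccoef α t (j - 1) k - acoef α t j k

/-- The lower-triangular L2-1_σ matrix `M` (entries vanish above the diagonal and
for column index `0`). -/
def Mentry (α : ℝ) (t : ℕ → ℝ) (k j : ℕ) : ℝ :=
  if j = 0 ∨ k < j then 0
  else if j = k then ccoef α t (k - 1) k + (1 - α / 2) ^ (1 - α) / ((1 - α) * tau t k ^ α)
  else if j = 1 then -acoef α t 1 k
  else dcoef α t j k

end

noncomputable section

/-- The weights `g_k(α)` (for an `n`-step mesh): `g_1`, `g_n` (when `n ≠ 2`), and the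
generic formula for `2 ≤ k ≤ n-1` (also used for `k = n = 2`). -/
def gfun (α : ℝ) (t : ℕ → ℝ) (n k : ℕ) : ℝ :=
  if k = 1 then
    ((1 - α / 2) * tau t 1) ^ (-α) * (2 * (1 - α / 2) - (1 - α) / rho t 2 ^ α)
  else if k = n ∧ n ≠ 2 then
    (1 - α) * ccoef α t (n - 1) n + ((1 - α / 2) * tau t n) ^ (-α)
  else
    (1 - α) * ccoef α t (k - 1) k
      + ((1 - α / 2) * tau t k) ^ (-α) *
        (1 - α * (1 - α) / ((1 + rho t (k + 1)) * rho t (k + 1) ^ α) *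
          ∫ s in (0:ℝ)..1,
            s * (rho t (k + 1) + s) / ((1 - α / 2) * rho t (k + 1) + s))

end

/-!
Write the row entries as functionals of the kernel `s ↦ (t_k^* - s) ^ (-α)`. Abel summation inside
each row expresses `xᵀ(M + Mᵀ)x - (1 - α)⁻¹ ∑ g_k x_k²` through differences of squares of partial
sums of `x`, with the increments along the row as coefficients; it is nonnegative as soon as these
increments decrease from one row to the next and are nonnegative in the last row. Away from the
diagonal an increment is a functional that is nonnegative on increasing convex functions, the
step-ratio condition being what a comparison with support lines requires, and both a kernel and its
decrement from one row to the next are increasing and convex. On the diagonal, the term subtracted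
in `g_k` is large enough to dominate, after an integration by parts, the part of the
increment of row `k + 1` that has no counterpart in row `k`.
-/

section TriangularQuadraticForm

variable {R : Type*} [CommRing R]

lemma sum_sub_mul_sum_Ico (a x : ℕ → R) (k : ℕ) :
    ∑ i ∈ range k, (a (i + 1) - a i) * ∑ j ∈ Ico (i + 1) k, x j
      = ∑ j ∈ range k, (a j - a 0) * x j := by
  induction k with
  | zero => simp
  | succ k ih =>
    have hsplit : ∀ i ∈ range k, (a (i + 1) - a i) * ∑ j ∈ Ico (i + 1) (k + 1), x j
        = (a (i + 1) - a i) * (∑ j ∈ Ico (i + 1) k, x j) + (a (i + 1) - a i) * x k :=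
      fun i hi => by rw [sum_Ico_succ_top (mem_range.1 hi), mul_add]
    rw [sum_range_succ, sum_congr rfl hsplit, sum_add_distrib, ih, ← sum_mul, sum_range_sub,
      Ico_self, sum_empty, mul_zero, add_zero, sum_range_succ]

lemma sum_sub_mul_sq_sub_sq (a x : ℕ → R) (k : ℕ) :
    ∑ i ∈ range k, (a (i + 1) - a i) *
        ((∑ j ∈ Ico (i + 1) (k + 1), x j) ^ 2 - (∑ j ∈ Ico (i + 1) k, x j) ^ 2)
      = (a k - a 0) * x k ^ 2 + 2 * x k * ∑ j ∈ range k, (a j - a 0) * x j := by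
  rw [← sum_sub_mul_sum_Ico, ← sum_range_sub, sum_mul, mul_sum, ← sum_add_distrib]
  refine sum_congr rfl fun i hi => ?_
  rw [sum_Ico_succ_top (mem_range.1 hi)]
  ring

lemma quadForm_eq_of_lowerTriangular {M : ℕ → ℕ → R} (hM : ∀ k j, k < j → M k j = 0)
    (x : ℕ → R) (n : ℕ) :
    ∑ k ∈ Icc 1 n, ∑ j ∈ Icc 1 n, x k * (M k j + M j k) * x j
      = ∑ k ∈ Icc 1 n, (2 * M k k * x k ^ 2 + 2 * x k * ∑ j ∈ Ico 1 k, M k j * x j) := by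
  induction n with
  | zero => simp
  | succ n ih =>
    have hcol : ∑ k ∈ Icc 1 n, x k * (M k (n + 1) + M (n + 1) k) * x (n + 1)
        = x (n + 1) * ∑ j ∈ Ico 1 (n + 1), M (n + 1) j * x j := by
      rw [mul_sum]
      refine sum_congr rfl fun k hk => ?_
      rw [hM k (n + 1) (Nat.lt_succ_of_le (mem_Icc.1 hk).2)]
      ring
    have hrow : ∑ k ∈ Icc 1 n, x (n + 1) * (M (n + 1) k + M k (n + 1)) * x k
        = x (n + 1) * ∑ j ∈ Ico 1 (n + 1), M (n + 1) j * x j := by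
      rw [← hcol]
      exact sum_congr rfl fun k _ => by ring
    simp only [sum_Icc_succ_top n.succ_pos, sum_add_distrib] at ih ⊢
    rw [ih, hcol, hrow]
    ring

/-- The array `N` with `xᵀ(M + Mᵀ)x - ∑ w_k x_k² = ∑ x_k (N_kk x_k + 2 ∑_{j<k} N_kj x_j)` for
lower triangular `M`; only its entries on and below the diagonal matter. -/
def subDiag (M : ℕ → ℕ → R) (w : ℕ → R) (k j : ℕ) : R :=
  if j = k then 2 * M k k - w k else M k j

variable [LinearOrder R] [IsStrictOrderedRing R]

/- Abel summation turns row `k` into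
`∑ i < k, (N k (i + 1) - N k i) * (S i k ^ 2 - S i (k - 1) ^ 2)` with `S i k = ∑ i < j ≤ k, x j`,
and since the increments of `N` decrease with `k`, the sum over the rows telescopes. -/
lemma sum_sub_mul_sq_le {N : ℕ → ℕ → R} {n : ℕ}
    (hanti : ∀ k < n, ∀ i < k, N (k + 1) (i + 1) - N (k + 1) i ≤ N k (i + 1) - N k i)
    (x : ℕ → R) :
    ∑ i ∈ range n, (N n (i + 1) - N n i) * (∑ j ∈ Ico (i + 1) (n + 1), x j) ^ 2
      ≤ ∑ k ∈ Icc 1 n, ((N k k - N k 0) * x k ^ 2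
          + 2 * x k * ∑ j ∈ range k, (N k j - N k 0) * x j) := by
  induction n with
  | zero => simp
  | succ n ih =>
    have hprev := ih fun k hk => hanti k (hk.trans n.lt_succ_self)
    have hdrop :
        ∑ i ∈ range (n + 1),
            (N (n + 1) (i + 1) - N (n + 1) i) * (∑ j ∈ Ico (i + 1) (n + 1), x j) ^ 2
          ≤ ∑ i ∈ range n, (N n (i + 1) - N n i) * (∑ j ∈ Ico (i + 1) (n + 1), x j) ^ 2 := by
      rw [sum_range_succ, Ico_self, sum_empty, zero_pow two_ne_zero, mul_zero, add_zero]
      exact sum_le_sum fun i hi => mul_le_mul_of_nonneg_right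
        (hanti n n.lt_succ_self i (mem_range.1 hi)) (sq_nonneg _)
    rw [sum_Icc_succ_top n.succ_pos, ← sum_sub_mul_sq_sub_sq]
    simp only [mul_sub _ (_ ^ 2), sum_sub_distrib]
    linarith

theorem sum_mul_sq_le_quadForm {M : ℕ → ℕ → R} {w : ℕ → R} {n : ℕ}
    (hM : ∀ k j, k < j → M k j = 0) (hM0 : ∀ k, M k 0 = 0)
    (hanti : ∀ k < n, ∀ i < k, subDiag M w (k + 1) (i + 1) - subDiag M w (k + 1) i
      ≤ subDiag M w k (i + 1) - subDiag M w k i)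
    (hlast : ∀ i < n, 0 ≤ subDiag M w n (i + 1) - subDiag M w n i) (x : ℕ → R) :
    ∑ k ∈ Icc 1 n, w k * x k ^ 2
      ≤ ∑ k ∈ Icc 1 n, ∑ j ∈ Icc 1 n, x k * (M k j + M j k) * x j := by
  have hnonneg := (sum_nonneg fun i hi => mul_nonneg (hlast i (mem_range.1 hi))
    (sq_nonneg (∑ j ∈ Ico (i + 1) (n + 1), x j))).trans (sum_sub_mul_sq_le hanti x)
  rw [quadForm_eq_of_lowerTriangular hM, ← sub_nonneg, ← sum_sub_distrib]
  refine hnonneg.trans_eq (sum_congr rfl fun k hk => ?_)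
  have hk : 1 ≤ k := (mem_Icc.1 hk).1
  have hdiag : subDiag M w k k = 2 * M k k - w k := if_pos rfl
  have hoff : ∀ j < k, subDiag M w k j = M k j := fun j hj => if_neg hj.ne
  have hrow : ∑ j ∈ range k, subDiag M w k j * x j = ∑ j ∈ Ico 1 k, M k j * x j := by
    rw [sum_congr rfl fun j hj => by rw [hoff j (mem_range.1 hj)], range_eq_Ico,
      sum_eq_sum_Ico_succ_bot hk, hM0, zero_mul, zero_add]
  simp only [hoff 0 hk, hM0, sub_zero, hrow, hdiag]
  ring

end TriangularQuadraticForm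

section SegmentAverages

variable {ψ φ : ℝ → ℝ} {a b c : ℝ}

/-- The average of `ψ` over the segment from `a` to `b`. -/
noncomputable def segMean (ψ : ℝ → ℝ) (a b : ℝ) : ℝ := ∫ θ in (0 : ℝ)..1, ψ (a + θ * (b - a))

/-- The first moment of `ψ` about the midpoint of the segment from `a` to `b`, normalised to
`(b - a) / 6` for `ψ = id`. -/
noncomputable def segSkew (ψ : ℝ → ℝ) (a b : ℝ) : ℝ :=
  ∫ θ in (0 : ℝ)..1, (2 * θ - 1) * ψ (a + θ * (b - a))

lemma add_mul_sub_mem_Icc (hab : a ≤ b) {θ : ℝ} (hθ : θ ∈ Set.Icc (0 : ℝ) 1) :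
    a + θ * (b - a) ∈ Set.Icc a b :=
  ⟨by nlinarith [hθ.1], by nlinarith [hθ.2]⟩

lemma continuousOn_comp_segment (hab : a ≤ b) (hψ : ContinuousOn ψ (Set.Icc a b)) :
    ContinuousOn (fun θ => ψ (a + θ * (b - a))) (Set.uIcc 0 1) := by
  rw [Set.uIcc_of_le zero_le_one]
  exact hψ.comp (by fun_prop) fun θ hθ => add_mul_sub_mem_Icc hab hθ

lemma intervalIntegrable_comp_segment (hab : a ≤ b) (hψ : ContinuousOn ψ (Set.Icc a b)) :
    IntervalIntegrable (fun θ => ψ (a + θ * (b - a))) volume 0 1 :=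
  (continuousOn_comp_segment hab hψ).intervalIntegrable

lemma intervalIntegrable_skew_segment (hab : a ≤ b) (hψ : ContinuousOn ψ (Set.Icc a b)) :
    IntervalIntegrable (fun θ => (2 * θ - 1) * ψ (a + θ * (b - a))) volume 0 1 :=
  (intervalIntegrable_comp_segment hab hψ).continuousOn_mul (by fun_prop)

lemma segMean_sub (hab : a ≤ b) (hψ : ContinuousOn ψ (Set.Icc a b))
    (hφ : ContinuousOn φ (Set.Icc a b)) :
    segMean (ψ - φ) a b = segMean ψ a b - segMean φ a b :=
  intervalIntegral.integral_sub (intervalIntegrable_comp_segment hab hψ)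
    (intervalIntegrable_comp_segment hab hφ)

lemma segSkew_sub (hab : a ≤ b) (hψ : ContinuousOn ψ (Set.Icc a b))
    (hφ : ContinuousOn φ (Set.Icc a b)) :
    segSkew (ψ - φ) a b = segSkew ψ a b - segSkew φ a b := by
  rw [segSkew, segSkew, segSkew, ← intervalIntegral.integral_sub
    (intervalIntegrable_skew_segment hab hψ) (intervalIntegrable_skew_segment hab hφ)]
  simp only [Pi.sub_apply, mul_sub]

lemma segSkew_neg (ψ : ℝ → ℝ) (a b : ℝ) : segSkew (-ψ) a b = -segSkew ψ a b := by
  simp only [segSkew, Pi.neg_apply, mul_neg, intervalIntegral.integral_neg]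

lemma segMean_const (y a b : ℝ) : segMean (fun _ => y) a b = y := by
  simp [segMean]

lemma integral_two_mul_sub_one_mul (p q : ℝ) :
    ∫ θ in (0 : ℝ)..1, (2 * θ - 1) * (p + θ * q) = q / 6 := by
  have hderiv : ∀ θ ∈ Set.uIcc (0 : ℝ) 1,
      HasDerivAt (fun θ => p * (θ ^ 2 - θ) + q * (2 / 3 * θ ^ 3 - θ ^ 2 / 2))
        ((2 * θ - 1) * (p + θ * q)) θ := fun θ _ => by
    refine ((((hasDerivAt_pow 2 θ).sub (hasDerivAt_id θ)).const_mul p).add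
      ((((hasDerivAt_pow 3 θ).const_mul (2 / 3)).sub
        ((hasDerivAt_pow 2 θ).div_const 2)).const_mul q)).congr_deriv ?_
    push_cast
    ring
  rw [intervalIntegral.integral_eq_sub_of_hasDerivAt hderiv
    (Continuous.intervalIntegrable (by fun_prop) 0 1)]
  ring

lemma segSkew_const (y a b : ℝ) : segSkew (fun _ => y) a b = 0 := by
  simpa [segSkew] using integral_two_mul_sub_one_mul y 0

lemma segMean_const_mul (c a b : ℝ) : segMean (fun s => c * s) a b = c * ((a + b) / 2) := by
  have hint : ∫ θ in (0 : ℝ)..1, θ * (b - a) = (b - a) / 2 := by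
    rw [intervalIntegral.integral_mul_const, integral_id]
    ring
  rw [segMean, intervalIntegral.integral_const_mul, intervalIntegral.integral_add
    (by simp) (Continuous.intervalIntegrable (by fun_prop) 0 1), hint,
    intervalIntegral.integral_const]
  simp only [sub_zero, one_smul]
  ring

lemma segSkew_const_mul (c a b : ℝ) : segSkew (fun s => c * s) a b = c * ((b - a) / 6) := by
  rw [← integral_two_mul_sub_one_mul a, ← intervalIntegral.integral_const_mul]
  exact intervalIntegral.integral_congr fun θ _ => by ring

lemma segSkew_nonneg_of_monotoneOn (hab : a ≤ b) (hψ : ContinuousOn ψ (Set.Icc a b))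
    (hmono : MonotoneOn ψ (Set.Icc a b)) : 0 ≤ segSkew ψ a b := by
  have hmid : a + 1 / 2 * (b - a) ∈ Set.Icc a b := add_mul_sub_mem_Icc hab (by norm_num)
  rw [← segSkew_const (ψ (a + 1 / 2 * (b - a))) a b]
  refine intervalIntegral.integral_mono_on zero_le_one
    (intervalIntegrable_skew_segment hab continuousOn_const)
    (intervalIntegrable_skew_segment hab hψ) fun θ hθ => ?_
  have hmem := add_mul_sub_mem_Icc hab hθ
  rcases le_total θ (1 / 2) with hle | hge
  · exact mul_le_mul_of_nonpos_left (hmono hmem hmid (by gcongr)) (by linarith)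
  · exact mul_le_mul_of_nonneg_left (hmono hmid hmem (by gcongr)) (by linarith)

lemma segSkew_nonpos_of_antitoneOn (hab : a ≤ b) (hψ : ContinuousOn ψ (Set.Icc a b))
    (hanti : AntitoneOn ψ (Set.Icc a b)) : segSkew ψ a b ≤ 0 := by
  have := segSkew_nonneg_of_monotoneOn hab hψ.neg hanti.neg
  rwa [segSkew_neg, neg_nonneg] at this

lemma segMean_le_of_monotoneOn (hab : a ≤ b) (hψ : ContinuousOn ψ (Set.Icc a b))
    (hmono : MonotoneOn ψ (Set.Icc a b)) : segMean ψ a b ≤ ψ b := by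
  rw [← segMean_const (ψ b) a b]
  refine intervalIntegral.integral_mono_on zero_le_one (intervalIntegrable_comp_segment hab hψ)
    (by simp) fun θ hθ => ?_
  have hmem := add_mul_sub_mem_Icc hab hθ
  exact hmono hmem (Set.right_mem_Icc.2 hab) hmem.2

/- Pointwise, `(2θ - 1) * (ψ - ψ a) ≤ ψ - ψ a`. -/
lemma segSkew_le_segMean_sub (hab : a ≤ b) (hψ : ContinuousOn ψ (Set.Icc a b))
    (hmono : MonotoneOn ψ (Set.Icc a b)) : segSkew ψ a b ≤ segMean ψ a b - ψ a := by
  rw [← sub_zero (segSkew ψ a b), ← segSkew_const (ψ a) a b, ← segMean_const (ψ a) a b,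
    ← segSkew_sub hab hψ continuousOn_const, ← segMean_sub hab hψ continuousOn_const,
    segMean_const]
  refine intervalIntegral.integral_mono_on zero_le_one
    (intervalIntegrable_skew_segment hab (hψ.sub continuousOn_const))
    (intervalIntegrable_comp_segment hab (hψ.sub continuousOn_const)) fun θ hθ => ?_
  have hmem := add_mul_sub_mem_Icc hab hθ
  refine mul_le_of_le_one_left (sub_nonneg.2 ?_) (by linarith [hθ.2])
  exact hmono (Set.left_mem_Icc.2 hab) hmem hmem.1

lemma le_segSkew_of_monotoneOn_sub (hab : a ≤ b) (hψ : ContinuousOn ψ (Set.Icc a b))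
    (hmono : MonotoneOn (ψ - fun s => c * s) (Set.Icc a b)) :
    c * ((b - a) / 6) ≤ segSkew ψ a b := by
  have hlin : ContinuousOn (fun s => c * s) (Set.Icc a b) := by fun_prop
  have := segSkew_nonneg_of_monotoneOn hab (hψ.sub hlin) hmono
  rwa [segSkew_sub hab hψ hlin, segSkew_const_mul, sub_nonneg] at this

lemma segSkew_le_of_antitoneOn_sub (hab : a ≤ b) (hψ : ContinuousOn ψ (Set.Icc a b))
    (hanti : AntitoneOn (ψ - fun s => c * s) (Set.Icc a b)) :
    segSkew ψ a b ≤ c * ((b - a) / 6) := by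
  have hlin : ContinuousOn (fun s => c * s) (Set.Icc a b) := by fun_prop
  have := segSkew_nonpos_of_antitoneOn hab (hψ.sub hlin) hanti
  rwa [segSkew_sub hab hψ hlin, segSkew_const_mul, sub_nonpos] at this

lemma segMean_le_of_monotoneOn_sub (hab : a ≤ b) (hψ : ContinuousOn ψ (Set.Icc a b))
    (hmono : MonotoneOn (ψ - fun s => c * s) (Set.Icc a b)) :
    segMean ψ a b ≤ ψ b - c * ((b - a) / 2) := by
  have hlin : ContinuousOn (fun s => c * s) (Set.Icc a b) := by fun_prop
  have := segMean_le_of_monotoneOn hab (hψ.sub hlin) hmono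
  rw [segMean_sub hab hψ hlin, segMean_const_mul, Pi.sub_apply] at this
  linarith

end SegmentAverages

section IncreasingConvex

variable {S : Set ℝ} {ψ : ℝ → ℝ} {T a b d h : ℝ}

lemma antitoneOn_of_convexOn_of_isMinOn (hψ : ConvexOn ℝ S ψ) (hb : b ∈ S)
    (hmin : IsMinOn ψ S b) : AntitoneOn ψ (S ∩ Set.Iic b) := fun _ hx _ hy hxy =>
  (hψ.le_max_of_mem_Icc hx.1 hb ⟨hxy, hy.2⟩).trans (max_le le_rfl (hmin hx.1))

lemma monotoneOn_of_convexOn_of_isMinOn (hψ : ConvexOn ℝ S ψ) (hb : b ∈ S)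
    (hmin : IsMinOn ψ S b) : MonotoneOn ψ (S ∩ Set.Ici b) := fun _ hx _ hy hxy =>
  (hψ.le_max_of_mem_Icc hb hy.1 ⟨hx.2, hxy⟩).trans (max_le (hmin hy.1) le_rfl)

lemma convexOn_sub_const_mul (hψ : ConvexOn ℝ S ψ) (c : ℝ) :
    ConvexOn ℝ S (ψ - fun s => c * s) :=
  hψ.sub ((LinearMap.mulLeft ℝ c).concaveOn hψ.1)

lemma exists_isMinOn_sub_const_mul (hψ : ConvexOn ℝ S ψ) (hb : b ∈ interior S) :
    ∃ c, IsMinOn (ψ - fun s => c * s) S b := by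
  refine ⟨derivWithin ψ (Set.Ioi b) b,
    (convexOn_sub_const_mul hψ _).isMinOn_of_rightDeriv_eq_zero hb ?_⟩
  have hlin : HasDerivWithinAt (fun s => derivWithin ψ (Set.Ioi b) b * s)
      (derivWithin ψ (Set.Ioi b) b) (Set.Ioi b) b := by
    simpa using (hasDerivWithinAt_id b (Set.Ioi b)).const_mul (derivWithin ψ (Set.Ioi b) b)
  rw [((hψ.hasDerivWithinAt_rightDeriv_of_mem_interior hb).sub hlin).derivWithin
    (uniqueDiffWithinAt_Ioi b), sub_self]

/-- The class of functions to which the kernels `s ↦ (t_k^* - s) ^ (-α)` and their decrements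
in `k` belong. -/
structure IncConvexOn (S : Set ℝ) (ψ : ℝ → ℝ) : Prop where
  monotoneOn : MonotoneOn ψ S
  convexOn : ConvexOn ℝ S ψ

namespace IncConvexOn

lemma continuousOn_Icc (hψ : IncConvexOn (Set.Iio T) ψ) (hbT : b < T) :
    ContinuousOn ψ (Set.Icc a b) :=
  (hψ.convexOn.continuousOn isOpen_Iio).mono fun _ hs => hs.2.trans_lt hbT

lemma monotoneOn_Icc (hψ : IncConvexOn (Set.Iio T) ψ) (hbT : b < T) :
    MonotoneOn ψ (Set.Icc a b) :=
  hψ.monotoneOn.mono fun _ hs => hs.2.trans_lt hbT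

lemma exists_nonneg_isMinOn_sub_const_mul (hψ : IncConvexOn (Set.Iio T) ψ) (hbT : b < T) :
    ∃ c, 0 ≤ c ∧ IsMinOn (ψ - fun s => c * s) (Set.Iio T) b := by
  obtain ⟨c, hmin⟩ := exists_isMinOn_sub_const_mul hψ.convexOn
    (b := b) (by rwa [interior_Iio])
  have hleft : b - 1 ∈ Set.Iio T := (sub_one_lt b).trans hbT
  have hmono : ψ (b - 1) ≤ ψ b := hψ.monotoneOn hleft hbT (sub_one_lt b).le
  have hle : ψ b - c * b ≤ ψ (b - 1) - c * (b - 1) := hmin hleft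
  exact ⟨c, by linarith, hmin⟩

/- Every term is compared with its value on a support line of `ψ` at `b`; for slope `c` the total
is `c * ((d - b) ^ 2 / (6 * h) + (d - b) / 2 - (b - a) ^ 3 / (6 * (d - b) * (d - a)))`, and this
is where the mesh condition comes from. -/
lemma segSkew_div_sub_segSkew_add_nonneg (hψ : IncConvexOn (Set.Iio T) ψ)
    (hab : a ≤ b) (hbd : b < d) (hdT : d < T) (hh : 0 < h)
    (hmesh : h * (b - a) ^ 3 ≤ (d - b) ^ 2 * (d - a) * (d - b + 3 * h)) :
    0 ≤ (d - b) / h * segSkew ψ b d - (b - a) ^ 2 / ((d - b) * (d - a)) * segSkew ψ a b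
      + ψ d - segMean ψ b d := by
  have hbT : b < T := hbd.trans hdT
  obtain ⟨c, hc, hmin⟩ := hψ.exists_nonneg_isMinOn_sub_const_mul hbT
  have hconv := convexOn_sub_const_mul hψ.convexOn c
  have hanti : AntitoneOn (ψ - fun s => c * s) (Set.Icc a b) :=
    (antitoneOn_of_convexOn_of_isMinOn hconv hbT hmin).mono fun s hs => ⟨hs.2.trans_lt hbT, hs.2⟩
  have hmono : MonotoneOn (ψ - fun s => c * s) (Set.Icc b d) :=
    (monotoneOn_of_convexOn_of_isMinOn hconv hbT hmin).mono fun s hs => ⟨hs.2.trans_lt hdT, hs.1⟩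
  have hleft := segSkew_le_of_antitoneOn_sub hab (hψ.continuousOn_Icc hbT) hanti
  have hright := le_segSkew_of_monotoneOn_sub hbd.le (hψ.continuousOn_Icc hdT) hmono
  have hmean := segMean_le_of_monotoneOn_sub hbd.le (hψ.continuousOn_Icc hdT) hmono
  have hbd' : 0 < d - b := sub_pos.2 hbd
  have had' : 0 < d - a := sub_pos.2 (hab.trans_lt hbd)
  have hline : 0 ≤ (d - b) / h * (c * ((d - b) / 6))
      - (b - a) ^ 2 / ((d - b) * (d - a)) * (c * ((b - a) / 6)) + c * ((d - b) / 2) := by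
    have hrw : (d - b) / h * (c * ((d - b) / 6))
        - (b - a) ^ 2 / ((d - b) * (d - a)) * (c * ((b - a) / 6)) + c * ((d - b) / 2)
        = c * ((d - b) ^ 2 * (d - a) * (d - b + 3 * h) - h * (b - a) ^ 3)
          / (6 * h * ((d - b) * (d - a))) := by
      field_simp
      ring
    rw [hrw]
    exact div_nonneg (mul_nonneg hc (sub_nonneg.2 hmesh)) (by positivity)
  have hright' := mul_le_mul_of_nonneg_left hright (div_pos hbd' hh).le
  have hleft' := mul_le_mul_of_nonneg_left hleft
    (div_nonneg (sq_nonneg (b - a)) (mul_pos hbd' had').le)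
  linarith

end IncConvexOn

end IncreasingConvex

section Kernel

variable {α β σ ρ T T' a b s : ℝ} {ψ ψ' : ℝ → ℝ}

/-- The fractional kernel `s ↦ (T - s) ^ (-β)`. -/
noncomputable def kernel (β T s : ℝ) : ℝ := (T - s) ^ (-β)

lemma hasDerivAt_kernel (hs : s < T) : HasDerivAt (kernel β T) (β * kernel (β + 1) T s) s := by
  have hsub : HasDerivAt (fun s => T - s) (-1) s := by simpa using (hasDerivAt_id s).const_sub T
  refine (hsub.rpow_const (p := -β) (Or.inl (sub_pos.2 hs).ne')).congr_deriv ?_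
  rw [kernel, neg_add']
  ring

lemma kernel_pos (hs : s < T) : 0 < kernel β T s :=
  rpow_pos_of_pos (sub_pos.2 hs) _

lemma kernel_le_kernel_of_le (hβ : 0 ≤ β) (hs : s < T) (hT : T ≤ T') :
    kernel β T' s ≤ kernel β T s :=
  rpow_le_rpow_of_nonpos (sub_pos.2 hs) (by linarith) (neg_nonpos.2 hβ)

lemma monotoneOn_kernel (hβ : 0 ≤ β) : MonotoneOn (kernel β T) (Set.Iio T) :=
  fun _ _ _ hv huv => rpow_le_rpow_of_nonpos (sub_pos.2 hv) (by linarith) (neg_nonpos.2 hβ)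

lemma monotoneOn_Iio_of_hasDerivAt (hderiv : ∀ s < T, HasDerivAt ψ (ψ' s) s)
    (hnonneg : ∀ s < T, 0 ≤ ψ' s) : MonotoneOn ψ (Set.Iio T) := by
  refine monotoneOn_of_hasDerivWithinAt_nonneg (f' := ψ') (convex_Iio T)
    (fun s hs => (hderiv s hs).continuousAt.continuousWithinAt) ?_ ?_ <;> rw [interior_Iio]
  exacts [fun s hs => (hderiv s hs).hasDerivWithinAt, hnonneg]

lemma incConvexOn_Iio_of_hasDerivAt (hderiv : ∀ s < T, HasDerivAt ψ (ψ' s) s)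
    (hnonneg : ∀ s < T, 0 ≤ ψ' s) (hmono : MonotoneOn ψ' (Set.Iio T)) :
    IncConvexOn (Set.Iio T) ψ where
  monotoneOn := monotoneOn_Iio_of_hasDerivAt hderiv hnonneg
  convexOn := by
    refine MonotoneOn.convexOn_of_deriv (convex_Iio T)
      (fun s hs => (hderiv s hs).continuousAt.continuousWithinAt) ?_ ?_ <;> rw [interior_Iio]
    exacts [fun s hs => (hderiv s hs).differentiableAt.differentiableWithinAt,
      hmono.congr fun s hs => (hderiv s hs).deriv.symm]

lemma incConvexOn_kernel (hα : 0 ≤ α) : IncConvexOn (Set.Iio T) (kernel α T) :=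
  incConvexOn_Iio_of_hasDerivAt (fun _ hs => hasDerivAt_kernel hs)
    (fun _ hs => mul_nonneg hα (kernel_pos hs).le)
    fun _ hu _ hv huv => mul_le_mul_of_nonneg_left
      (monotoneOn_kernel (by linarith) hu hv huv) hα

lemma hasDerivAt_kernel_sub_kernel (hT : T ≤ T') (hs : s < T) :
    HasDerivAt (kernel β T - kernel β T')
      (β * (kernel (β + 1) T s - kernel (β + 1) T' s)) s :=
  ((hasDerivAt_kernel hs).sub (hasDerivAt_kernel (hs.trans_le hT))).congr_deriv (by ring)

lemma monotoneOn_kernel_sub_kernel (hβ : 0 ≤ β) (hT : T ≤ T') :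
    MonotoneOn (kernel β T - kernel β T') (Set.Iio T) :=
  monotoneOn_Iio_of_hasDerivAt (fun _ hs => hasDerivAt_kernel_sub_kernel hT hs)
    fun _ hs => mul_nonneg hβ (sub_nonneg.2 (kernel_le_kernel_of_le (by linarith) hs hT))

lemma incConvexOn_kernel_sub_kernel (hα : 0 ≤ α) (hT : T ≤ T') :
    IncConvexOn (Set.Iio T) (kernel α T - kernel α T') :=
  incConvexOn_Iio_of_hasDerivAt (fun _ hs => hasDerivAt_kernel_sub_kernel hT hs)
    (fun _ hs => mul_nonneg hα (sub_nonneg.2 (kernel_le_kernel_of_le (by linarith) hs hT)))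
    fun _ hu _ hv huv => mul_le_mul_of_nonneg_left
      (monotoneOn_kernel_sub_kernel (by linarith) hT hu hv huv) hα

lemma segMean_sub_mul_segSkew (hab : a ≤ b) (hψ : ContinuousOn ψ (Set.Icc a b)) (c : ℝ) :
    segMean ψ a b - c * segSkew ψ a b
      = ∫ θ in (0 : ℝ)..1, (1 - c * (2 * θ - 1)) * ψ (a + θ * (b - a)) := by
  rw [segMean, segSkew, ← intervalIntegral.integral_const_mul, ← intervalIntegral.integral_sub
    (intervalIntegrable_comp_segment hab hψ)
    ((intervalIntegrable_skew_segment hab hψ).const_mul c)]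
  exact intervalIntegral.integral_congr fun θ _ => by ring

lemma segMean_sub_mul_segSkew_eq_add_integral_deriv (hab : a ≤ b)
    (hderiv : ∀ s ∈ Set.Icc a b, HasDerivAt ψ (ψ' s) s) (hψ' : ContinuousOn ψ' (Set.Icc a b))
    (c : ℝ) :
    segMean ψ a b - c * segSkew ψ a b
      = ψ a + ∫ θ in (0 : ℝ)..1, ((1 - c) * (1 - θ) + c * (1 - θ) ^ 2)
          * (ψ' (a + θ * (b - a)) * (b - a)) := by
  have hweight : ∀ θ ∈ Set.uIcc (0 : ℝ) 1, HasDerivAt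
      (fun θ => -((1 - c) * (1 - θ) + c * (1 - θ) ^ 2)) (1 - c * (2 * θ - 1)) θ := fun θ _ => by
    have hsub : HasDerivAt (fun θ : ℝ => 1 - θ) (-1) θ := by
      simpa using (hasDerivAt_id θ).const_sub 1
    refine ((hsub.const_mul (1 - c)).add ((hsub.pow 2).const_mul c)).neg.congr_deriv ?_
    push_cast
    ring
  have hcomp : ∀ θ ∈ Set.uIcc (0 : ℝ) 1, HasDerivAt (fun θ => ψ (a + θ * (b - a)))
      (ψ' (a + θ * (b - a)) * (b - a)) θ := fun θ hθ => by
    rw [Set.uIcc_of_le zero_le_one] at hθ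
    have hsegment : HasDerivAt (fun θ => a + θ * (b - a)) (b - a) θ := by
      simpa using ((hasDerivAt_id θ).mul_const (b - a)).const_add a
    exact (hderiv _ (add_mul_sub_mem_Icc hab hθ)).comp θ hsegment
  have hparts := intervalIntegral.integral_mul_deriv_eq_deriv_mul hweight hcomp
    (Continuous.intervalIntegrable (by fun_prop) 0 1)
    ((intervalIntegrable_comp_segment hab hψ').mul_const (b - a))
  rw [segMean_sub_mul_segSkew hab fun s hs => (hderiv s hs).continuousAt.continuousWithinAt]
  simp only [neg_mul, intervalIntegral.integral_neg] at hparts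
  simp only [sub_self, mul_zero, ne_eq, OfNat.ofNat_ne_zero, not_false_eq_true, zero_pow, add_zero,
    one_mul, add_sub_cancel, zero_mul, neg_zero, sub_zero, mul_one, one_pow, sub_add_cancel,
    sub_neg_eq_add, zero_add] at hparts
  linarith

/-- The integral in the weights `g_k(α)`, with `ρ` standing for `ρ_{k+1}`. -/
noncomputable def weightIntegral (σ ρ : ℝ) : ℝ :=
  ∫ s in (0 : ℝ)..1, s * (ρ + s) / (σ * ρ + s)

lemma intervalIntegrable_weightIntegral (hσρ : 0 < σ * ρ) :
    IntervalIntegrable (fun s => s * (ρ + s) / (σ * ρ + s)) volume 0 1 := by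
  refine ContinuousOn.intervalIntegrable (ContinuousOn.div (by fun_prop) (by fun_prop) ?_)
  rw [Set.uIcc_of_le zero_le_one]
  exact fun s hs => (add_pos_of_pos_of_nonneg hσρ hs.1).ne'

lemma weightIntegral_nonneg (hσ : 0 < σ) (hρ : 0 < ρ) : 0 ≤ weightIntegral σ ρ :=
  intervalIntegral.integral_nonneg zero_le_one fun s hs => by
    have := hs.1
    positivity

lemma weightIntegral_le_one (hσ : 1 / 2 ≤ σ) (hρ : 0 < ρ) : weightIntegral σ ρ ≤ 1 := by
  have hσρ : 0 < σ * ρ := by positivity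
  have hint : ∫ s in (0 : ℝ)..1, 2 * s = 1 := by
    rw [intervalIntegral.integral_const_mul, integral_id]
    norm_num
  rw [← hint]
  refine intervalIntegral.integral_mono_on zero_le_one (intervalIntegrable_weightIntegral hσρ)
    (Continuous.intervalIntegrable (by fun_prop) 0 1) fun s hs => ?_
  have hs0 : 0 ≤ s := hs.1
  have hρσ : ρ + s ≤ 2 * (σ * ρ + s) := by nlinarith
  rw [div_le_iff₀ (by positivity)]
  linarith [mul_le_mul_of_nonneg_left hρσ hs0]

/- Here `y` is the distance `b - a`, and `b - s * (b - a)` lies at distance `y * (σ * ρ + s)` from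
`T`. -/
lemma weight_mul_deriv_kernel_le {y : ℝ} (hα : 0 ≤ α) (hσ : 0 < σ) (hρ : 0 < ρ) (hy : 0 < y)
    (hs : 0 ≤ s) :
    ((1 - (1 + ρ)⁻¹) * s + (1 + ρ)⁻¹ * s ^ 2) *
        (α * (y * (σ * ρ + s)) ^ (-(α + 1)) * y)
      ≤ (σ * y) ^ (-α) * (α / ((1 + ρ) * ρ ^ α)) * (s * (ρ + s) / (σ * ρ + s)) := by
  have hpow : (y * (σ * ρ + s)) ^ (-α) ≤ (σ * y) ^ (-α) / ρ ^ α := by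
    rw [div_eq_mul_inv, ← rpow_neg hρ.le, ← mul_rpow (by positivity) hρ.le]
    exact rpow_le_rpow_of_nonpos (by positivity) (by nlinarith) (neg_nonpos.2 hα)
  rw [neg_add', rpow_sub_one (by positivity)]
  calc ((1 - (1 + ρ)⁻¹) * s + (1 + ρ)⁻¹ * s ^ 2) *
        (α * ((y * (σ * ρ + s)) ^ (-α) / (y * (σ * ρ + s))) * y)
      = α * (s * (ρ + s) / ((1 + ρ) * (σ * ρ + s))) * (y * (σ * ρ + s)) ^ (-α) := by
        field_simp
        ring
    _ ≤ α * (s * (ρ + s) / ((1 + ρ) * (σ * ρ + s))) * ((σ * y) ^ (-α) / ρ ^ α) := by gcongr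
    _ = _ := by
        field_simp

lemma segMean_sub_segSkew_kernel_le (hα : 0 ≤ α) (hσ : 0 < σ) (hρ : 0 < ρ) (hab : a < b) :
    segMean (kernel α (b + σ * (ρ * (b - a)))) a b
        - (1 + ρ)⁻¹ * segSkew (kernel α (b + σ * (ρ * (b - a)))) a b
      ≤ kernel α (b + σ * (ρ * (b - a))) a
        + (σ * (b - a)) ^ (-α) * (α / ((1 + ρ) * ρ ^ α) * weightIntegral σ ρ) := by
  have hy : 0 < b - a := sub_pos.2 hab
  have hbT : b < b + σ * (ρ * (b - a)) := by linarith [mul_pos hσ (mul_pos hρ hy)]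
  set T := b + σ * (ρ * (b - a)) with hT
  have hcont : ContinuousOn (fun s => α * kernel (α + 1) T s) (Set.Icc a b) :=
    continuousOn_const.mul fun s hs =>
      (hasDerivAt_kernel (hs.2.trans_lt hbT)).continuousAt.continuousWithinAt
  have hreflect := intervalIntegral.integral_comp_sub_left (a := 0) (b := 1)
    (fun s => s * (ρ + s) / (σ * ρ + s)) 1
  rw [sub_self, sub_zero] at hreflect
  rw [segMean_sub_mul_segSkew_eq_add_integral_deriv hab.le
    (fun s hs => hasDerivAt_kernel (hs.2.trans_lt hbT)) hcont, weightIntegral, ← hreflect,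
    ← mul_assoc, ← intervalIntegral.integral_const_mul]
  refine add_le_add_right (intervalIntegral.integral_mono_on zero_le_one ?_ ?_ fun θ hθ => ?_) _
  · exact ((intervalIntegrable_comp_segment hab.le hcont).mul_const _).continuousOn_mul
      (by fun_prop)
  · refine IntervalIntegrable.const_mul ?_ _
    simpa using ((intervalIntegrable_weightIntegral (mul_pos hσ hρ)).comp_sub_left 1).symm
  · convert weight_mul_deriv_kernel_le hα hσ hρ hy (sub_nonneg.2 hθ.2) using 4
    rw [kernel, hT]
    ring_nf

end Kernel

section MeshFunctionals

variable {t : ℕ → ℝ} {ψ φ : ℝ → ℝ} {α T T' : ℝ} {i j : ℕ}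

lemma tau_succ (t : ℕ → ℝ) (i : ℕ) : tau t (i + 1) = t (i + 1) - t i := rfl

lemma tau_zero (t : ℕ → ℝ) : tau t 0 = 0 := sub_self (t 0)

lemma mesh_pred_le (hmono : StrictMono t) (j : ℕ) : t (j - 1) ≤ t j :=
  hmono.monotone (Nat.sub_le j 1)

lemma tau_nonneg (hmono : StrictMono t) (j : ℕ) : 0 ≤ tau t j :=
  sub_nonneg.2 (mesh_pred_le hmono j)

lemma tau_succ_pos (hmono : StrictMono t) (i : ℕ) : 0 < tau t (i + 1) :=
  sub_pos.2 (hmono i.lt_succ_self)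

/-- The functional `ψ ↦ c_j[ψ]` with `c_j^k = c_j[ψ]` for the kernel `ψ s = (t_k^* - s) ^ (-α)`.
Truncated subtraction makes it vanish for `j = 0`. -/
noncomputable def cFunctional (t : ℕ → ℝ) (j : ℕ) (ψ : ℝ → ℝ) : ℝ :=
  tau t j ^ 2 / (tau t (j + 1) * (tau t j + tau t (j + 1))) * segSkew ψ (t (j - 1)) (t j)

/-- The functional `ψ ↦ -a_j[ψ]` with `a_j^k = a_j[ψ]` for the kernel
`ψ s = (t_k^* - s) ^ (-α)`. -/
noncomputable def negAFunctional (t : ℕ → ℝ) (j : ℕ) (ψ : ℝ → ℝ) : ℝ :=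
  segMean ψ (t (j - 1)) (t j)
    - tau t j / (tau t j + tau t (j + 1)) * segSkew ψ (t (j - 1)) (t j)

/-- The restriction on consecutive step ratios `ρ = ρ_{i+1}`, `ρ' = ρ_{i+2}`, namely
`ρ' * (1 - 3 * ρ ^ 2 * (1 + ρ)) ≤ ρ ^ 2 * (1 + ρ)`, multiplied out so that it also makes sense,
and holds, for `i = 0`. -/
def StepCondition (t : ℕ → ℝ) (i : ℕ) : Prop :=
  tau t (i + 2) * tau t i ^ 3
    ≤ tau t (i + 1) ^ 2 * (tau t i + tau t (i + 1)) * (tau t (i + 1) + 3 * tau t (i + 2))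

/-- The part `c_{i+1} - c_i + ψ (t_{i+1}) + a_{i+1}` of the increment `d_{i+2} - d_{i+1}` that
involves the intervals ending at `t_i` and `t_{i+1}`. -/
noncomputable def endIncrement (t : ℕ → ℝ) (i : ℕ) (ψ : ℝ → ℝ) : ℝ :=
  cFunctional t (i + 1) ψ - cFunctional t i ψ + ψ (t (i + 1)) - negAFunctional t (i + 1) ψ

/-- The part `-a_{i+1} - ψ (t_i)` of the increment `d_{i+1} - d_i` that involves the interval
starting at `t_i`. -/
noncomputable def startIncrement (t : ℕ → ℝ) (i : ℕ) (ψ : ℝ → ℝ) : ℝ :=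
  negAFunctional t (i + 1) ψ - ψ (t i)

lemma cFunctional_zero (t : ℕ → ℝ) (ψ : ℝ → ℝ) : cFunctional t 0 ψ = 0 := by
  simp [cFunctional, tau_zero]

lemma cFunctional_sub (hmono : StrictMono t) (hψ : ContinuousOn ψ (Set.Iic (t j)))
    (hφ : ContinuousOn φ (Set.Iic (t j))) :
    cFunctional t j (ψ - φ) = cFunctional t j ψ - cFunctional t j φ := by
  rw [cFunctional, segSkew_sub (mesh_pred_le hmono j) (hψ.mono Set.Icc_subset_Iic_self)
    (hφ.mono Set.Icc_subset_Iic_self), mul_sub, cFunctional, cFunctional]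

lemma negAFunctional_sub (hmono : StrictMono t) (hψ : ContinuousOn ψ (Set.Iic (t j)))
    (hφ : ContinuousOn φ (Set.Iic (t j))) :
    negAFunctional t j (ψ - φ) = negAFunctional t j ψ - negAFunctional t j φ := by
  have hle := mesh_pred_le hmono j
  have hψ' := hψ.mono (Set.Icc_subset_Iic_self (a := t (j - 1)))
  have hφ' := hφ.mono (Set.Icc_subset_Iic_self (a := t (j - 1)))
  rw [negAFunctional, segMean_sub hle hψ' hφ', segSkew_sub hle hψ' hφ', negAFunctional,
    negAFunctional]
  ring

lemma endIncrement_sub (hmono : StrictMono t) (hψ : ContinuousOn ψ (Set.Iic (t (i + 1))))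
    (hφ : ContinuousOn φ (Set.Iic (t (i + 1)))) :
    endIncrement t i (ψ - φ) = endIncrement t i ψ - endIncrement t i φ := by
  have hsub : Set.Iic (t i) ⊆ Set.Iic (t (i + 1)) :=
    Set.Iic_subset_Iic.2 (hmono.monotone i.le_succ)
  simp only [endIncrement, negAFunctional_sub hmono hψ hφ, cFunctional_sub hmono hψ hφ,
    cFunctional_sub hmono (hψ.mono hsub) (hφ.mono hsub), Pi.sub_apply]
  ring

lemma startIncrement_sub (hmono : StrictMono t) (hψ : ContinuousOn ψ (Set.Iic (t (i + 1))))
    (hφ : ContinuousOn φ (Set.Iic (t (i + 1)))) :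
    startIncrement t i (ψ - φ) = startIncrement t i ψ - startIncrement t i φ := by
  simp only [startIncrement, negAFunctional_sub hmono hψ hφ, Pi.sub_apply]
  ring

lemma cFunctional_nonneg (hmono : StrictMono t) (hψ : IncConvexOn (Set.Iio T) ψ) (hT : t j < T) :
    0 ≤ cFunctional t j ψ := by
  have hj := tau_nonneg hmono j
  have hj' := tau_nonneg hmono (j + 1)
  exact mul_nonneg (by positivity) (segSkew_nonneg_of_monotoneOn (mesh_pred_le hmono j)
    (hψ.continuousOn_Icc hT) (hψ.monotoneOn_Icc hT))

lemma startIncrement_nonneg (hmono : StrictMono t) (hψ : IncConvexOn (Set.Iio T) ψ)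
    (hT : t (i + 1) < T) : 0 ≤ startIncrement t i ψ := by
  have hle : t i ≤ t (i + 1) := hmono.monotone i.le_succ
  have hskew_nonneg := segSkew_nonneg_of_monotoneOn hle (hψ.continuousOn_Icc hT)
    (hψ.monotoneOn_Icc hT)
  have hskew_le := segSkew_le_segMean_sub hle (hψ.continuousOn_Icc hT) (hψ.monotoneOn_Icc hT)
  have hratio : tau t (i + 1) / (tau t (i + 1) + tau t (i + 1 + 1)) ≤ 1 :=
    div_le_one_of_le₀ (le_add_of_nonneg_right (tau_nonneg hmono _))
      (add_nonneg (tau_nonneg hmono _) (tau_nonneg hmono _))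
  have := mul_le_of_le_one_left hskew_nonneg hratio
  rw [startIncrement, negAFunctional, Nat.add_sub_cancel]
  linarith

lemma endIncrement_nonneg (hmono : StrictMono t) (hψ : IncConvexOn (Set.Iio T) ψ)
    (hT : t (i + 1) < T) (hstep : StepCondition t i) : 0 ≤ endIncrement t i ψ := by
  have hlen : t (i + 1) - t (i - 1) = tau t i + tau t (i + 1) := by rw [tau, tau_succ]; ring
  have hτ₁ := tau_succ_pos hmono i
  have hτ₂ := tau_succ_pos hmono (i + 1)
  have hkey := hψ.segSkew_div_sub_segSkew_add_nonneg (mesh_pred_le hmono i)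
    (hmono (Nat.lt_add_one i)) hT hτ₂ (by rw [← tau_succ, hlen]; exact hstep)
  rw [← tau_succ, hlen] at hkey
  refine hkey.trans_eq ?_
  simp only [endIncrement, cFunctional, negAFunctional, Nat.add_sub_cancel]
  rw [show t i - t (i - 1) = tau t i from rfl]
  field_simp
  ring

lemma continuousOn_kernel_Iic {b : ℝ} (hb : b < T) : ContinuousOn (kernel α T) (Set.Iic b) :=
  fun _ hs => (hasDerivAt_kernel (hs.trans_lt hb)).continuousAt.continuousWithinAt

lemma startIncrement_kernel_anti (hα : 0 ≤ α) (hmono : StrictMono t) (hT : t (i + 1) < T)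
    (hTT' : T ≤ T') : startIncrement t i (kernel α T') ≤ startIncrement t i (kernel α T) := by
  have := startIncrement_nonneg hmono (incConvexOn_kernel_sub_kernel hα hTT') hT
  rwa [startIncrement_sub hmono (continuousOn_kernel_Iic hT)
    (continuousOn_kernel_Iic (hT.trans_le hTT')), sub_nonneg] at this

lemma endIncrement_kernel_anti (hα : 0 ≤ α) (hmono : StrictMono t) (hT : t (i + 1) < T)
    (hTT' : T ≤ T') (hstep : StepCondition t i) :
    endIncrement t i (kernel α T') ≤ endIncrement t i (kernel α T) := by
  have := endIncrement_nonneg hmono (incConvexOn_kernel_sub_kernel hα hTT') hT hstep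
  rwa [endIncrement_sub hmono (continuousOn_kernel_Iic hT)
    (continuousOn_kernel_Iic (hT.trans_le hTT')), sub_nonneg] at this

lemma negAFunctional_kernel_anti (hα : 0 ≤ α) (hmono : StrictMono t) (hT : t (i + 1) < T)
    (hTT' : T ≤ T') :
    negAFunctional t (i + 1) (kernel α T') ≤ negAFunctional t (i + 1) (kernel α T) := by
  have hstart := startIncrement_kernel_anti hα hmono hT hTT'
  have hnode := kernel_le_kernel_of_le hα ((hmono i.lt_succ_self).trans hT) hTT'
  rw [startIncrement, startIncrement] at hstart
  linarith

lemma negAFunctional_le (hmono : StrictMono t) (hψ : IncConvexOn (Set.Iio T) ψ) (hT : t j < T) :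
    negAFunctional t j ψ ≤ ψ (t j) := by
  have hle := mesh_pred_le hmono j
  have hj := tau_nonneg hmono j
  have hj' := tau_nonneg hmono (j + 1)
  have hskew := segSkew_nonneg_of_monotoneOn hle (hψ.continuousOn_Icc hT) (hψ.monotoneOn_Icc hT)
  have hmean := segMean_le_of_monotoneOn hle (hψ.continuousOn_Icc hT) (hψ.monotoneOn_Icc hT)
  have := mul_nonneg (div_nonneg hj (add_nonneg hj hj')) hskew
  rw [negAFunctional]
  linarith

end MeshFunctionals

section MatrixEntries

variable {α : ℝ} {t : ℕ → ℝ} {i j k : ℕ}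

/-- The kernel `s ↦ (t_k^* - s) ^ (-α)` of row `k`. -/
noncomputable abbrev rowKernel (α : ℝ) (t : ℕ → ℝ) (k : ℕ) : ℝ → ℝ := kernel α (tstar α t k)

lemma lt_tstar (hα : α ∈ Set.Ioo (0 : ℝ) 1) (hmono : StrictMono t) (hjk : j < k) :
    t j < tstar α t k := by
  obtain ⟨k, rfl⟩ := Nat.exists_eq_add_one.2 (Nat.zero_lt_of_lt hjk)
  have hσ : 0 < 1 - α / 2 := by linarith [hα.2]
  exact (hmono.monotone (Nat.le_of_lt_succ hjk)).trans_lt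
    (lt_add_of_pos_right _ (mul_pos hσ (tau_succ_pos hmono k)))

lemma tstar_le_tstar_succ (hα : α ∈ Set.Ioo (0 : ℝ) 1) (hmono : StrictMono t) (k : ℕ) :
    tstar α t k ≤ tstar α t (k + 1) := by
  refine le_trans ?_ (lt_tstar hα hmono k.lt_succ_self).le
  rw [tstar, tau]
  nlinarith [hα.1, mesh_pred_le hmono k]

lemma rowKernel_succ (α : ℝ) (t : ℕ → ℝ) (i : ℕ) :
    rowKernel α t (i + 1) (t i) = ((1 - α / 2) * tau t (i + 1)) ^ (-α) := by
  rw [rowKernel, kernel, tstar, Nat.add_sub_cancel, add_sub_cancel_left]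

lemma rowKernel_segment (hα : α ∈ Set.Ioo (0 : ℝ) 1) (hmono : StrictMono t) (hjk : j < k) {θ : ℝ}
    (hθ : θ ∈ Set.uIcc (0 : ℝ) 1) :
    rowKernel α t k (t (j - 1) + θ * (t j - t (j - 1)))
      = ((tstar α t k - (t (j - 1) + θ * tau t j)) ^ α)⁻¹ := by
  rw [Set.uIcc_of_le zero_le_one] at hθ
  have hle := (add_mul_sub_mem_Icc (mesh_pred_le hmono j) hθ).2.trans (lt_tstar hα hmono hjk).le
  exact rpow_neg (sub_nonneg.2 hle) α

lemma ccoef_eq_cFunctional (hα : α ∈ Set.Ioo (0 : ℝ) 1) (hmono : StrictMono t) (hjk : j < k) :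
    ccoef α t j k = cFunctional t j (rowKernel α t k) := by
  rw [ccoef, cFunctional, segSkew, ← intervalIntegral.integral_const_mul]
  refine intervalIntegral.integral_congr fun θ hθ => ?_
  simp only [rowKernel_segment hα hmono hjk hθ]
  rw [← div_div, div_eq_mul_inv (_ / _)]
  ring

lemma acoef_eq_neg_negAFunctional (hα : α ∈ Set.Ioo (0 : ℝ) 1) (hmono : StrictMono t)
    (hjk : j < k) : acoef α t j k = -negAFunctional t j (rowKernel α t k) := by
  have hcont : ContinuousOn (rowKernel α t k) (Set.Icc (t (j - 1)) (t j)) :=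
    (continuousOn_kernel_Iic (lt_tstar hα hmono hjk)).mono Set.Icc_subset_Iic_self
  have hsum : 0 < tau t j + tau t (j + 1) :=
    add_pos_of_nonneg_of_pos (tau_nonneg hmono j) (tau_succ_pos hmono j)
  rw [acoef, negAFunctional, segMean_sub_mul_segSkew (mesh_pred_le hmono j) hcont,
    ← intervalIntegral.integral_neg]
  refine intervalIntegral.integral_congr fun θ hθ => ?_
  simp only [rowKernel_segment hα hmono hjk hθ]
  rw [← div_div, div_eq_mul_inv (_ / _), ← neg_mul]
  congr 1
  field_simp
  ring

lemma Mentry_of_lt (hkj : k < j) : Mentry α t k j = 0 := if_pos (Or.inr hkj)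

lemma Mentry_zero (k : ℕ) : Mentry α t k 0 = 0 := if_pos (Or.inl rfl)

lemma Mentry_succ_of_lt (hα : α ∈ Set.Ioo (0 : ℝ) 1) (hmono : StrictMono t) (hik : i + 1 < k) :
    Mentry α t k (i + 1)
      = cFunctional t i (rowKernel α t k) + negAFunctional t (i + 1) (rowKernel α t k) := by
  have hcond : ¬(i + 1 = 0 ∨ k < i + 1) := by omega
  rw [Mentry, if_neg hcond, if_neg hik.ne, dcoef, acoef_eq_neg_negAFunctional hα hmono hik,
    Nat.add_sub_cancel, ccoef_eq_cFunctional hα hmono ((Nat.lt_add_one i).trans hik),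
    sub_neg_eq_add]
  rcases eq_or_ne i 0 with rfl | hi
  · rw [if_pos rfl, cFunctional_zero, zero_add, zero_add, acoef_eq_neg_negAFunctional hα hmono hik,
      neg_neg]
  · rw [if_neg (by omega)]

lemma Mentry_self (hα : α ∈ Set.Ioo (0 : ℝ) 1) (hmono : StrictMono t) (i : ℕ) :
    Mentry α t (i + 1) (i + 1)
      = cFunctional t i (rowKernel α t (i + 1))
        + (1 - α)⁻¹ * ((1 - α / 2) * rowKernel α t (i + 1) (t i)) := by
  have hσ : 0 < 1 - α / 2 := by linarith [hα.2]
  have hτ := tau_succ_pos hmono i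
  rw [Mentry, if_neg (by omega), if_pos rfl, Nat.add_sub_cancel,
    ccoef_eq_cFunctional hα hmono (Nat.lt_add_one i), rowKernel_succ,
    mul_rpow hσ.le hτ.le, rpow_neg hτ.le, rpow_one_sub' hσ.le (sub_pos.2 hα.2).ne', rpow_neg hσ.le,
    ← div_div, div_eq_mul_inv (_ / _), div_eq_mul_inv (_ / _), div_eq_mul_inv]
  ring

end MatrixEntries

section Weights

variable {α ρ : ℝ} {t : ℕ → ℝ} {i k n : ℕ}

/-- The amount by which `(1 - α)⁻¹ * g_k(α)`, for `2 ≤ k < n`, falls short of the weight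
`c_{k-1}^k + (1 - α)⁻¹ * (σ * τ_k) ^ (-α)` of the last row. -/
noncomputable def weightDefect (α : ℝ) (t : ℕ → ℝ) (k : ℕ) : ℝ :=
  ((1 - α / 2) * tau t k) ^ (-α) *
    (α / ((1 + rho t (k + 1)) * rho t (k + 1) ^ α)
      * weightIntegral (1 - α / 2) (rho t (k + 1)))

lemma rho_pos (hmono : StrictMono t) (i : ℕ) : 0 < rho t (i + 2) :=
  div_pos (tau_succ_pos hmono (i + 1)) (tau_succ_pos hmono i)

lemma weightDefect_nonneg (hα : α ∈ Set.Ioo (0 : ℝ) 1) (hmono : StrictMono t) (i : ℕ) :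
    0 ≤ weightDefect α t (i + 1) := by
  have hα0 : 0 < α := hα.1
  have hσ : 0 < 1 - α / 2 := by linarith [hα.2]
  have hτ := tau_succ_pos hmono i
  have hρ := rho_pos hmono i
  have hJ := weightIntegral_nonneg hσ hρ
  rw [weightDefect]
  positivity

lemma startIncrement_rowKernel_le_weightDefect (hα : α ∈ Set.Ioo (0 : ℝ) 1)
    (hmono : StrictMono t) (i : ℕ) :
    startIncrement t i (rowKernel α t (i + 2)) ≤ weightDefect α t (i + 1) := by
  have hσ : 0 < 1 - α / 2 := by linarith [hα.2]
  have hτ := tau_succ_pos hmono i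
  have hτ' := tau_succ_pos hmono (i + 1)
  have hratio : rho t (i + 2) * (t (i + 1) - t i) = tau t (i + 2) := div_mul_cancel₀ _ hτ.ne'
  have hinv : (1 + rho t (i + 2))⁻¹ = tau t (i + 1) / (tau t (i + 1) + tau t (i + 2)) := by
    change (1 + tau t (i + 2) / tau t (i + 1))⁻¹ = _
    field_simp
  have hbound := segMean_sub_segSkew_kernel_le hα.1.le hσ (rho_pos hmono i)
    (hmono i.lt_succ_self)
  rw [hratio, hinv] at hbound
  exact sub_le_iff_le_add'.2 hbound

lemma gfun_succ_succ (hα : α ∈ Set.Ioo (0 : ℝ) 1) (hmono : StrictMono t) (h : i + 2 ≠ n ∨ n = 2) :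
    (1 - α)⁻¹ * gfun α t n (i + 2) = cFunctional t (i + 1) (rowKernel α t (i + 2))
      + (1 - α)⁻¹ * rowKernel α t (i + 2) (t (i + 1)) - weightDefect α t (i + 2) := by
  have hα1 : 1 - α ≠ 0 := (sub_pos.2 hα.2).ne'
  rw [gfun, if_neg (by omega), if_neg (by omega), Nat.add_succ_sub_one,
    ccoef_eq_cFunctional hα hmono (Nat.lt_add_one (i + 1)), rowKernel_succ α t (i + 1),
    weightDefect, weightIntegral]
  field_simp
  ring

lemma gfun_last (hα : α ∈ Set.Ioo (0 : ℝ) 1) (hmono : StrictMono t) (hi : i ≠ 0) :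
    (1 - α)⁻¹ * gfun α t (i + 2) (i + 2) = cFunctional t (i + 1) (rowKernel α t (i + 2))
      + (1 - α)⁻¹ * rowKernel α t (i + 2) (t (i + 1)) := by
  rw [gfun, if_neg (by omega), if_pos ⟨rfl, by omega⟩, Nat.add_succ_sub_one,
    ccoef_eq_cFunctional hα hmono (Nat.lt_add_one (i + 1)), rowKernel_succ α t (i + 1), mul_add,
    inv_mul_cancel_left₀ (sub_pos.2 hα.2).ne']

lemma gfun_last_le (hα : α ∈ Set.Ioo (0 : ℝ) 1) (hmono : StrictMono t) (i : ℕ) :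
    (1 - α)⁻¹ * gfun α t (i + 2) (i + 2) ≤ cFunctional t (i + 1) (rowKernel α t (i + 2))
      + (1 - α)⁻¹ * rowKernel α t (i + 2) (t (i + 1)) := by
  rcases eq_or_ne i 0 with rfl | hi
  · rw [gfun_succ_succ hα hmono (Or.inr rfl)]
    exact sub_le_self _ (weightDefect_nonneg hα hmono 1)
  · exact (gfun_last hα hmono hi).le

lemma mul_one_sub_le_quarter (α : ℝ) : α * (1 - α) ≤ 1 / 4 := by
  linarith [sq_nonneg (α - 1 / 2)]

lemma quarter_lt_one_add_mul_rpow (hα : α ∈ Set.Ioo (0 : ℝ) 1) (hρ : 1 / 4 ≤ ρ) :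
    1 / 4 < (1 + ρ) * ρ ^ α := by
  rcases le_total 1 ρ with h | h
  · have : 1 ≤ ρ ^ α := one_le_rpow h hα.1.le
    nlinarith
  · have : ρ ≤ ρ ^ α := by
      simpa using rpow_le_rpow_of_exponent_ge (by linarith) h hα.2.le
    nlinarith

lemma firstWeight_pos (hα : α ∈ Set.Ioo (0 : ℝ) 1) (hρ : 1 / 4 ≤ ρ) :
    0 < 2 * (1 - α / 2) - (1 - α) / ρ ^ α := by
  have hρ0 : 0 < ρ := by linarith
  have hα1 : 0 < 1 - α := sub_pos.2 hα.2
  have hinv : ρ⁻¹ ≤ 4 := by simpa using inv_anti₀ (by norm_num) hρ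
  have hbernoulli : (ρ ^ α)⁻¹ ≤ 1 + α * (ρ⁻¹ - 1) := by
    have := rpow_one_add_le_one_add_mul_self (s := ρ⁻¹ - 1) (p := α)
      (by linarith [inv_pos.2 hρ0]) hα.1.le hα.2.le
    rwa [add_sub_cancel, inv_rpow hρ0.le] at this
  have hbound : (1 - α) / ρ ^ α ≤ 1 - α + α * (1 - α) * 3 :=
    calc (1 - α) / ρ ^ α ≤ (1 - α) * (1 + α * (ρ⁻¹ - 1)) := by
          rw [div_eq_mul_inv]
          gcongr
      _ = 1 - α + α * (1 - α) * (ρ⁻¹ - 1) := by ring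
      _ ≤ 1 - α + α * (1 - α) * 3 := by
          have := mul_pos hα.1 hα1
          gcongr
          linarith
  linarith [mul_one_sub_le_quarter α]

lemma innerWeight_pos (hα : α ∈ Set.Ioo (0 : ℝ) 1) (hρ : 1 / 4 ≤ ρ) :
    0 < 1 - α * (1 - α) / ((1 + ρ) * ρ ^ α) * weightIntegral (1 - α / 2) ρ := by
  have hpow := quarter_lt_one_add_mul_rpow hα hρ
  have hnonneg : 0 ≤ α * (1 - α) := mul_nonneg hα.1.le (sub_nonneg.2 hα.2.le)
  have hJ : weightIntegral (1 - α / 2) ρ ≤ 1 :=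
    weightIntegral_le_one (by linarith [hα.2]) (by linarith)
  have hcoef : α * (1 - α) / ((1 + ρ) * ρ ^ α) < 1 := by
    rw [div_lt_one (by linarith)]
    exact (mul_one_sub_le_quarter α).trans_lt hpow
  exact sub_pos.2 ((mul_le_of_le_one_right (div_nonneg hnonneg (by linarith)) hJ).trans_lt hcoef)

lemma gfun_pos (hα : α ∈ Set.Ioo (0 : ℝ) 1) (hmono : StrictMono t)
    (hρ : ∀ k, 2 ≤ k → k ≤ n + 1 → 1 / 4 ≤ rho t k) (hk : 1 ≤ k) (hkn : k ≤ n) :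
    0 < gfun α t n k := by
  obtain ⟨i, rfl⟩ := Nat.exists_eq_add_of_le' hk
  have hκ : 0 < ((1 - α / 2) * tau t (i + 1)) ^ (-α) :=
    rpow_pos_of_pos (mul_pos (by linarith [hα.2]) (tau_succ_pos hmono i)) _
  have hweight := hρ (i + 2) (by omega) (by omega)
  have hc : 0 ≤ (1 - α) * ccoef α t i (i + 1) := by
    rw [ccoef_eq_cFunctional hα hmono (Nat.lt_add_one i)]
    exact mul_nonneg (sub_nonneg.2 hα.2.le) (cFunctional_nonneg hmono (incConvexOn_kernel hα.1.le)
      (lt_tstar hα hmono (Nat.lt_add_one i)))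
  unfold gfun
  split_ifs with hfirst hlast
  · obtain rfl : i = 0 := by omega
    exact mul_pos hκ (firstWeight_pos hα hweight)
  · obtain rfl := hlast.1
    exact add_pos_of_nonneg_of_pos hc hκ
  · exact add_pos_of_nonneg_of_pos hc (mul_pos hκ (innerWeight_pos hα hweight))

end Weights

section Assembly

variable {α : ℝ} {t : ℕ → ℝ} {i j k n : ℕ}

/-- The array `subDiag` for the matrix `M` and the weights `(1 - α)⁻¹ * g_k(α)`, which depend on
the number `n` of steps. -/
noncomputable def excessEntry (α : ℝ) (t : ℕ → ℝ) (n : ℕ) : ℕ → ℕ → ℝ :=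
  subDiag (Mentry α t) fun k => (1 - α)⁻¹ * gfun α t n k

lemma excessEntry_self (k : ℕ) :
    excessEntry α t n k k = 2 * Mentry α t k k - (1 - α)⁻¹ * gfun α t n k := if_pos rfl

lemma excessEntry_zero (k : ℕ) : excessEntry α t n (k + 1) 0 = 0 := by
  rw [excessEntry, subDiag, if_neg k.succ_ne_zero.symm, Mentry_zero]

lemma excessEntry_succ_of_lt (hα : α ∈ Set.Ioo (0 : ℝ) 1) (hmono : StrictMono t) (hik : i + 1 < k) :
    excessEntry α t n k (i + 1)
      = cFunctional t i (rowKernel α t k) + negAFunctional t (i + 1) (rowKernel α t k) := by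
  rw [excessEntry, subDiag, if_neg hik.ne, Mentry_succ_of_lt hα hmono hik]

lemma excessEntry_one_of_lt (hα : α ∈ Set.Ioo (0 : ℝ) 1) (hmono : StrictMono t) (hk : 1 < k) :
    excessEntry α t n k 1 = negAFunctional t 1 (rowKernel α t k) := by
  rw [excessEntry_succ_of_lt (i := 0) hα hmono hk, cFunctional_zero, zero_add, zero_add]

lemma excessEntry_one_one (hα : α ∈ Set.Ioo (0 : ℝ) 1) (hmono : StrictMono t) :
    excessEntry α t n 1 1 = rowKernel α t 2 (t 1) := by
  have hα1 : 1 - α ≠ 0 := (sub_pos.2 hα.2).ne'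
  have hσ : 0 < 1 - α / 2 := by linarith [hα.2]
  have hτ : 0 < tau t 1 := tau_succ_pos hmono 0
  have hρ : 0 < rho t 2 := rho_pos hmono 0
  have hnext : rowKernel α t 2 (t 1) = rowKernel α t 1 (t 0) / rho t 2 ^ α := by
    have hratio : tau t 2 = tau t 1 * rho t 2 := (mul_div_cancel₀ (tau t 2) hτ.ne').symm
    rw [rowKernel_succ α t 1, rowKernel_succ α t 0, hratio, ← mul_assoc,
      mul_rpow (mul_pos hσ hτ).le hρ.le, rpow_neg hρ.le, ← div_eq_mul_inv]
  have hfirst : gfun α t n 1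
      = rowKernel α t 1 (t 0) * (2 * (1 - α / 2) - (1 - α) / rho t 2 ^ α) := by
    rw [gfun, if_pos rfl, rowKernel_succ α t 0]
  rw [excessEntry_self, Mentry_self (i := 0) hα hmono, hfirst, cFunctional_zero, hnext]
  field_simp
  ring

lemma excessEntry_self_increment (hα : α ∈ Set.Ioo (0 : ℝ) 1) (hmono : StrictMono t) (j : ℕ) :
    excessEntry α t n (j + 2) (j + 2) - excessEntry α t n (j + 2) (j + 1)
      = endIncrement t j (rowKernel α t (j + 2))
        + (cFunctional t (j + 1) (rowKernel α t (j + 2))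
          + (1 - α)⁻¹ * rowKernel α t (j + 2) (t (j + 1)) - (1 - α)⁻¹ * gfun α t n (j + 2)) := by
  have hα1 : 1 - α ≠ 0 := (sub_pos.2 hα.2).ne'
  rw [excessEntry_self, Mentry_self (i := j + 1) hα hmono,
    excessEntry_succ_of_lt hα hmono (Nat.lt_add_one _), endIncrement]
  field_simp
  ring

lemma excessEntry_increment_of_lt (hα : α ∈ Set.Ioo (0 : ℝ) 1) (hmono : StrictMono t)
    (hjk : j + 2 < k) :
    excessEntry α t n k (j + 2) - excessEntry α t n k (j + 1)
      = endIncrement t j (rowKernel α t k) + startIncrement t (j + 1) (rowKernel α t k) := by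
  rw [excessEntry_succ_of_lt hα hmono hjk,
    excessEntry_succ_of_lt hα hmono ((Nat.lt_add_one _).trans hjk), endIncrement, startIncrement]
  ring

lemma excessEntry_self_increment_of_lt (hα : α ∈ Set.Ioo (0 : ℝ) 1) (hmono : StrictMono t)
    (hjn : j + 2 < n) :
    excessEntry α t n (j + 2) (j + 2) - excessEntry α t n (j + 2) (j + 1)
      = endIncrement t j (rowKernel α t (j + 2)) + weightDefect α t (j + 2) := by
  rw [excessEntry_self_increment hα hmono, gfun_succ_succ hα hmono (Or.inl hjn.ne)]
  ring

lemma excessEntry_one_succ_le (hα : α ∈ Set.Ioo (0 : ℝ) 1) (hmono : StrictMono t) (hk : 1 ≤ k) :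
    excessEntry α t n (k + 1) 1 ≤ excessEntry α t n k 1 := by
  rw [excessEntry_one_of_lt hα hmono (Nat.lt_add_one_of_le hk)]
  rcases hk.eq_or_lt with rfl | hk
  · rw [excessEntry_one_one hα hmono]
    exact negAFunctional_le hmono (incConvexOn_kernel hα.1.le) (lt_tstar hα hmono one_lt_two)
  · rw [excessEntry_one_of_lt hα hmono hk]
    exact negAFunctional_kernel_anti hα.1.le hmono (lt_tstar hα hmono hk)
      (tstar_le_tstar_succ hα hmono k)

lemma excessEntry_increment_succ_le (hα : α ∈ Set.Ioo (0 : ℝ) 1) (hmono : StrictMono t)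
    (hstep : StepCondition t j) (hjk : j + 2 ≤ k) (hkn : k < n) :
    excessEntry α t n (k + 1) (j + 2) - excessEntry α t n (k + 1) (j + 1)
      ≤ excessEntry α t n k (j + 2) - excessEntry α t n k (j + 1) := by
  have hend := endIncrement_kernel_anti hα.1.le hmono
    (lt_tstar hα hmono (Nat.lt_of_succ_le hjk)) (tstar_le_tstar_succ hα hmono k) hstep
  rw [excessEntry_increment_of_lt hα hmono (Nat.lt_add_one_of_le hjk)]
  rcases hjk.eq_or_lt with rfl | hjk
  · rw [excessEntry_self_increment_of_lt hα hmono hkn]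
    exact add_le_add hend (startIncrement_rowKernel_le_weightDefect hα hmono (j + 1))
  · rw [excessEntry_increment_of_lt hα hmono hjk]
    exact add_le_add hend (startIncrement_kernel_anti hα.1.le hmono (lt_tstar hα hmono hjk)
      (tstar_le_tstar_succ hα hmono k))

lemma excessEntry_one_nonneg (hα : α ∈ Set.Ioo (0 : ℝ) 1) (hmono : StrictMono t) (hk : 1 ≤ k) :
    0 ≤ excessEntry α t n k 1 := by
  rcases hk.eq_or_lt with rfl | hk
  · rw [excessEntry_one_one hα hmono]
    exact (kernel_pos (lt_tstar hα hmono one_lt_two)).le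
  · have hstart := startIncrement_nonneg hmono (incConvexOn_kernel hα.1.le) (lt_tstar hα hmono hk)
    have hnode : 0 < rowKernel α t k (t 0) := kernel_pos (lt_tstar hα hmono (zero_lt_one.trans hk))
    rw [excessEntry_one_of_lt hα hmono hk]
    exact hnode.le.trans (sub_nonneg.1 hstart)

lemma excessEntry_last_increment_nonneg (hα : α ∈ Set.Ioo (0 : ℝ) 1) (hmono : StrictMono t)
    (hstep : StepCondition t j) (hjn : j + 2 ≤ n) :
    0 ≤ excessEntry α t n n (j + 2) - excessEntry α t n n (j + 1) := by
  have hconv : IncConvexOn (Set.Iio (tstar α t n)) (rowKernel α t n) := incConvexOn_kernel hα.1.le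
  have hend := endIncrement_nonneg hmono hconv (lt_tstar hα hmono (Nat.lt_of_succ_le hjn)) hstep
  rcases hjn.eq_or_lt with rfl | hjn
  · rw [excessEntry_self_increment hα hmono]
    exact add_nonneg hend (sub_nonneg.2 (gfun_last_le hα hmono j))
  · rw [excessEntry_increment_of_lt hα hmono hjn]
    exact add_nonneg hend (startIncrement_nonneg hmono hconv (lt_tstar hα hmono hjn))

theorem sum_gfun_mul_sq_le_quadForm (hα : α ∈ Set.Ioo (0 : ℝ) 1) (hmono : StrictMono t)
    (hstep : ∀ j, j + 2 ≤ n → StepCondition t j) (x : ℕ → ℝ) :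
    (1 - α)⁻¹ * ∑ k ∈ Icc 1 n, gfun α t n k * x k ^ 2
      ≤ ∑ k ∈ Icc 1 n, ∑ j ∈ Icc 1 n, x k * (Mentry α t k j + Mentry α t j k) * x j := by
  simp only [mul_sum, ← mul_assoc]
  refine sum_mul_sq_le_quadForm (fun k j => Mentry_of_lt) Mentry_zero
    (fun k hkn i hik => ?_) (fun i hin => ?_) x
  · rcases i with _ | j
    · obtain ⟨k, rfl⟩ := Nat.exists_eq_add_of_lt hik
      rw [← excessEntry, excessEntry_zero, excessEntry_zero, sub_zero, sub_zero]
      exact excessEntry_one_succ_le hα hmono hik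
    · exact excessEntry_increment_succ_le hα hmono (hstep j (by omega)) hik hkn
  · rcases i with _ | j
    · obtain ⟨n, rfl⟩ := Nat.exists_eq_add_of_lt hin
      rw [← excessEntry, excessEntry_zero, sub_zero]
      exact excessEntry_one_nonneg hα hmono hin
    · exact excessEntry_last_increment_nonneg hα hmono (hstep j hin) hin

end Assembly

section StepRatios

variable {ρ ρ' ρstar η : ℝ} {t : ℕ → ℝ} {i : ℕ}

lemma stepCondition_zero (hmono : StrictMono t) : StepCondition t 0 := by
  have hτ := tau_nonneg hmono 1
  have hτ' := tau_nonneg hmono 2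
  rw [StepCondition, tau_zero, zero_pow three_ne_zero, mul_zero]
  positivity

lemma stepCondition_succ (hmono : StrictMono t)
    (hρ : rho t (i + 3) * (1 - 3 * rho t (i + 2) ^ 2 * (1 + rho t (i + 2)))
      ≤ rho t (i + 2) ^ 2 * (1 + rho t (i + 2))) : StepCondition t (i + 1) := by
  have hτ := tau_succ_pos hmono i
  have hτ' := tau_succ_pos hmono (i + 1)
  have hρ_pos := rho_pos hmono i
  have h₂ : tau t (i + 2) = rho t (i + 2) * tau t (i + 1) := (div_mul_cancel₀ _ hτ.ne').symm
  have h₃ : tau t (i + 3) = rho t (i + 3) * tau t (i + 2) := (div_mul_cancel₀ _ hτ'.ne').symm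
  have hscaled := mul_le_mul_of_nonneg_right hρ
    (by positivity : 0 ≤ rho t (i + 2) * tau t (i + 1) ^ 4)
  change tau t (i + 3) * tau t (i + 1) ^ 3 ≤ tau t (i + 2) ^ 2 * (tau t (i + 1) + tau t (i + 2))
    * (tau t (i + 2) + 3 * tau t (i + 3))
  rw [h₃, h₂]
  linarith

lemma quarter_lt_of_one_sub_le (hρ : 0 < ρ) (h : 1 - 3 * ρ ^ 2 * (1 + ρ) ≤ ρ * (1 + ρ)) :
    1 / 4 < ρ := by
  by_contra! hle
  have hprod : ρ * (1 + ρ) ≤ 5 / 16 := by nlinarith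
  nlinarith [mul_le_mul hle hprod (by positivity) (by norm_num)]

/-- The mesh condition of the theorem on the consecutive step ratios `ρ = ρ_k` and
`ρ' = ρ_{k+1}`. -/
def RatioCondition (ρstar η ρ ρ' : ℝ) : Prop :=
  (ρstar < ρ ∧ ρ < η ∧ ρstar < ρ' ∧ ρ' ≤ ρ ^ 2 * (1 + ρ) / (1 - 3 * ρ ^ 2 * (1 + ρ))) ∨
    (η ≤ ρ ∧ ρstar < ρ')

lemma RatioCondition.quarter_le (h : RatioCondition ρstar η ρ ρ') (hρstar : 0 < ρstar)
    (hroot : ρstar * (1 + ρstar) = 1 - 3 * ρstar ^ 2 * (1 + ρstar)) (hη : 0 < η)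
    (hηroot : 1 - 3 * η ^ 2 * (1 + η) = 0) : 1 / 4 ≤ ρ := by
  rcases h with ⟨hlt, -⟩ | ⟨hle, -⟩
  · exact ((quarter_lt_of_one_sub_le hρstar hroot.ge).trans hlt).le
  · exact (quarter_lt_of_one_sub_le hη (hηroot.le.trans (by positivity))).le.trans hle

lemma RatioCondition.step_le (h : RatioCondition ρstar η ρ ρ') (hρstar : 0 < ρstar) (hη : 0 < η)
    (hηroot : 1 - 3 * η ^ 2 * (1 + η) = 0) :
    ρ' * (1 - 3 * ρ ^ 2 * (1 + ρ)) ≤ ρ ^ 2 * (1 + ρ) := by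
  rcases h with ⟨hρ, hlt, -, hle⟩ | ⟨hle, hρ'⟩
  · have hρ0 : 0 < ρ := hρstar.trans hρ
    have : ρ ^ 2 * (1 + ρ) < η ^ 2 * (1 + η) := by gcongr
    exact (le_div_iff₀ (by linarith)).1 hle
  · have hρ0 : 0 < ρ := hη.trans_le hle
    have : η ^ 2 * (1 + η) ≤ ρ ^ 2 * (1 + ρ) := by gcongr
    exact (mul_nonpos_of_nonneg_of_nonpos (hρstar.trans hρ').le (by linarith)).trans
      (by positivity)

end StepRatios

theorem quadratic_form_psd_general {α : ℝ} (hα : α ∈ Set.Ioo (0 : ℝ) 1) {t : ℕ → ℝ}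
    (hmono : StrictMono t) {n : ℕ} (hρ : ∀ k, 2 ≤ k → k ≤ n + 1 → 1 / 4 ≤ rho t k)
    (hstep : ∀ k, 2 ≤ k → k < n → rho t (k + 1) * (1 - 3 * rho t k ^ 2 * (1 + rho t k))
      ≤ rho t k ^ 2 * (1 + rho t k)) (x : ℕ → ℝ) :
    (∑ k ∈ Icc 1 n, ∑ j ∈ Icc 1 n, x k * (Mentry α t k j + Mentry α t j k) * x j)
      ≥ (1 - α)⁻¹ * ∑ k ∈ Icc 1 n, gfun α t n k * x k ^ 2 ∧
    (1 - α)⁻¹ * ∑ k ∈ Icc 1 n, gfun α t n k * x k ^ 2 ≥ 0 ∧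
    ∀ k : ℕ, 1 ≤ k → k ≤ n → 0 < gfun α t n k := by
  have hpos : ∀ k, 1 ≤ k → k ≤ n → 0 < gfun α t n k := fun k => gfun_pos hα hmono hρ
  refine ⟨sum_gfun_mul_sq_le_quadForm hα hmono (fun j hj => ?_) x, ?_, hpos⟩
  · rcases j with _ | i
    · exact stepCondition_zero hmono
    · exact stepCondition_succ hmono (hstep (i + 2) (Nat.le_add_left 2 i) hj)
  · refine mul_nonneg (inv_nonneg.2 (sub_nonneg.2 hα.2.le)) (sum_nonneg fun k hk => ?_)
    have hk := mem_Icc.1 hk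
    exact mul_nonneg (hpos k hk.1 hk.2).le (sq_nonneg _)

/-- Positive semidefiniteness of the L2-1_σ bilinear form: under the step-ratio
condition, `xᵀ(M + Mᵀ)x ≥ (1-α)⁻¹ ∑ g_k(α) x_k² ≥ 0`, with every `g_k(α) > 0`. -/
theorem quadratic_form_psd (α : ℝ) (hα : α ∈ Set.Ioo (0:ℝ) 1)
    (t : ℕ → ℝ) (ht0 : t 0 = 0) (hmono : StrictMono t)
    (ρstar η : ℝ) (hρpos : 0 < ρstar)
    (hρroot : ρstar * (1 + ρstar) = 1 - 3 * ρstar ^ 2 * (1 + ρstar))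
    (hηpos : 0 < η) (hηroot : 1 - 3 * η ^ 2 * (1 + η) = 0)
    (hmesh : ∀ k : ℕ, 2 ≤ k →
      (ρstar < rho t k ∧ rho t k < η ∧ ρstar < rho t (k + 1) ∧
        rho t (k + 1) ≤ rho t k ^ 2 * (1 + rho t k) /
          (1 - 3 * rho t k ^ 2 * (1 + rho t k))) ∨
      (η ≤ rho t k ∧ ρstar < rho t (k + 1)))
    (n : ℕ) (hn : 1 ≤ n) (x : ℕ → ℝ) :
    (∑ k ∈ Finset.Icc 1 n, ∑ j ∈ Finset.Icc 1 n,
        x k * (Mentry α t k j + Mentry α t j k) * x j)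
      ≥ (1 - α)⁻¹ * ∑ k ∈ Finset.Icc 1 n, gfun α t n k * x k ^ 2 ∧
    (1 - α)⁻¹ * ∑ k ∈ Finset.Icc 1 n, gfun α t n k * x k ^ 2 ≥ 0 ∧
    ∀ k : ℕ, 1 ≤ k → k ≤ n → 0 < gfun α t n k := by
  exact quadratic_form_psd_general hα hmono
    (fun k hk _ => RatioCondition.quarter_le (hmesh k hk) hρpos hρroot hηpos hηroot)
    (fun k hk _ => RatioCondition.step_le (hmesh k hk) hρpos hηpos hηroot) x
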